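/- For every ε > 0 there exists n0 such that the following holds for every n ≥ n0. Let L and L' be simple graphs on the same n-element vertex set with e(L) ≥ (5/9 + ε)·binom(n,2) and e(L') ≥ (5/9)·binom(n,2). Let C be a connected component of L containing the maximum number of edges among the components of L, and let C' be a connected component of L' containing the maximum number of edges among the components of L'. Then C and C' have an edge in common: there exist vertices u, v with u, v ∈ C, u, v ∈ C', and {u, v} an edge of both L and L'. -/

import Mathlib

/-- The set of edges of `G` with both endpoints in the connected component `C`. -/
def compEdges {V : Type*} (G : SimpleGraph V) (C : G.ConnectedComponent) : Set (Sym2 V) :=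
  {e | e ∈ G.edgeSet ∧ ∀ x ∈ e, G.connectedComponentMk x = C}

open Classical in
/-- ordered adjacent pairs -/
noncomputable def arcs {V : Type} [Fintype V] (G : SimpleGraph V) : Finset (V × V) :=
  Finset.univ.filter fun p => G.Adj p.1 p.2

open Classical in
/-- ordered adjacent pairs in a component -/
noncomputable def carcs {V : Type} [Fintype V] (G : SimpleGraph V) (C : G.ConnectedComponent) :
    Finset (V × V) :=
  Finset.univ.filter fun p => G.Adj p.1 p.2 ∧ G.connectedComponentMk p.1 = C

open Classical in
/-- vertices of a component -/
noncomputable def cv {V : Type} [Fintype V] (G : SimpleGraph V) (C : G.ConnectedComponent) :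
    Finset V :=
  Finset.univ.filter fun v => G.connectedComponentMk v = C

lemma arcs_card {V : Type} [Fintype V] (G : SimpleGraph V) [Fintype G.edgeSet] :
    (arcs G).card = 2 * G.edgeFinset.card := by
  classical
  have h := G.sum_degrees_eq_twice_card_edges
  rw [arcs, Finset.card_filter, ← Finset.univ_product_univ, Finset.sum_product]
  have h2 : G.edgeFinset.card = (@SimpleGraph.edgeFinset V G (Subtype.fintype _)).card := by
    congr!
  rw [h2]
  convert h using 2 with v
  · rw [← Finset.card_filter, ← SimpleGraph.card_neighborFinset_eq_degree]
    congr 1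
    ext w
    simp

lemma mk_eq_of_adj {V : Type} {G : SimpleGraph V} {u v : V} (h : G.Adj u v) :
    G.connectedComponentMk u = G.connectedComponentMk v :=
  SimpleGraph.ConnectedComponent.sound h.reachable

lemma carcs_card {V : Type} [Fintype V] (G : SimpleGraph V) (C : G.ConnectedComponent) :
    (carcs G C).card = 2 * (compEdges G C).ncard := by
  classical
  let H : SimpleGraph V :=
    { Adj := fun u v => G.Adj u v ∧ G.connectedComponentMk u = C
      symm := ⟨fun u v h => ⟨h.1.symm, (mk_eq_of_adj h.1) ▸ h.2⟩⟩
      loopless := ⟨fun u h => G.loopless.irrefl u h.1⟩ }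
  have h1 : carcs G C = arcs H := by
    ext p; simp [carcs, arcs, H]
  have h2 : compEdges G C = H.edgeSet := by
    ext e
    induction e with
    | h u v =>
      simp only [compEdges, Set.mem_ofPred_eq, SimpleGraph.mem_edgeSet, Sym2.mem_iff, H]
      constructor
      · rintro ⟨a, b⟩
        exact ⟨a, b u (Or.inl rfl)⟩
      · rintro ⟨a, b⟩
        refine ⟨a, ?_⟩
        rintro x (rfl | rfl)
        · exact b
        · rw [← mk_eq_of_adj a, b]
  rw [h1, arcs_card, h2, ← SimpleGraph.coe_edgeFinset, Set.ncard_coe_finset]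

lemma carcs_sub {V : Type} [Fintype V] [DecidableEq V] (G : SimpleGraph V)
    (C : G.ConnectedComponent) : carcs G C ⊆ (cv G C).offDiag := by
  intro p hp
  simp only [carcs, Finset.mem_filter, Finset.mem_univ, true_and] at hp
  simp only [Finset.mem_offDiag, cv, Finset.mem_filter, Finset.mem_univ, true_and]
  exact ⟨hp.2, by rw [← mk_eq_of_adj hp.1, hp.2], hp.1.ne⟩

lemma offd {V : Type} [DecidableEq V] (S : Finset V) :
    (S.offDiag.card : ℝ) = S.card * (S.card - 1) := by
  rw [Finset.offDiag_card, Nat.cast_sub (Nat.le_mul_self _)]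
  push_cast; ring

lemma arcs_le {V : Type} [Fintype V] (G : SimpleGraph V) (C : G.ConnectedComponent) :
    ((arcs G).card : ℝ) ≤ (carcs G C).card +
      (Fintype.card V - (cv G C).card) * (Fintype.card V - (cv G C).card - 1) := by
  classical
  have h : arcs G ⊆ carcs G C ∪ ((cv G C)ᶜ).offDiag := by
    intro p hp
    simp only [arcs, Finset.mem_filter, Finset.mem_univ, true_and] at hp
    simp only [Finset.mem_union, carcs, Finset.mem_offDiag, cv, Finset.mem_compl,
      Finset.mem_filter, Finset.mem_univ, true_and]
    by_cases h : G.connectedComponentMk p.1 = C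
    · exact Or.inl ⟨hp, h⟩
    · exact Or.inr ⟨h, by rwa [← mk_eq_of_adj hp], hp.ne⟩
  have h1 := (Finset.card_le_card h).trans (Finset.card_union_le _ _)
  have h2 : ((arcs G).card : ℝ) ≤ (carcs G C).card + (((cv G C)ᶜ).offDiag.card : ℝ) := by
    exact_mod_cast h1
  rw [offd, Finset.card_compl, Nat.cast_sub (Finset.card_le_univ _)] at h2
  exact h2

lemma arcs_le_mul {V : Type} [Fintype V] (G : SimpleGraph V) (m : ℕ)
    (hm : ∀ C : G.ConnectedComponent, (cv G C).card ≤ m) :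
    ((arcs G).card : ℝ) + Fintype.card V ≤ Fintype.card V * m := by
  classical
  have h : (arcs G).card + Fintype.card V = ∑ v : V, ((Finset.univ.filter fun w => G.Adj v w).card + 1) := by
    rw [Finset.sum_add_distrib, arcs, Finset.card_filter, ← Finset.univ_product_univ,
      Finset.sum_product]
    congr 1
    · refine Finset.sum_congr rfl fun v _ => ?_
      rw [Finset.card_filter]
    · simp
  have h2 : ∀ v : V, (Finset.univ.filter fun w => G.Adj v w).card + 1 ≤ m := by
    intro v
    have : (insert v (Finset.univ.filter fun w => G.Adj v w)) ⊆ cv G (G.connectedComponentMk v) := by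
      intro w hw
      simp only [Finset.mem_insert, Finset.mem_filter, Finset.mem_univ, true_and, cv] at hw ⊢
      rcases hw with rfl | hw
      · rfl
      · exact (mk_eq_of_adj hw).symm
    have h3 := (Finset.card_le_card this).trans (hm _)
    rwa [Finset.card_insert_of_notMem (by simp)] at h3
  have h4 : (arcs G).card + Fintype.card V ≤ Fintype.card V * m := by
    rw [h]
    refine (Finset.sum_le_sum fun v _ => h2 v).trans ?_
    simp
  exact_mod_cast h4

lemma large_comp {V : Type} [Fintype V] (G : SimpleGraph V) (hV : 2 ≤ Fintype.card V)
    (hG : (5 / 9 : ℝ) * (Fintype.card V * (Fintype.card V - 1)) ≤ (arcs G).card)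
    (C : G.ConnectedComponent)
    (hC : ∀ D : G.ConnectedComponent, (carcs G D).card ≤ (carcs G C).card) :
    (2 / 3 : ℝ) * Fintype.card V ≤ (cv G C).card := by
  classical
  obtain ⟨M, -, hM⟩ := Finset.exists_max_image (Finset.univ : Finset G.ConnectedComponent)
    (fun D => (cv G D).card) ⟨C, Finset.mem_univ _⟩
  have h1 := arcs_le_mul G _ (fun D => hM D (Finset.mem_univ _))
  have h2 := arcs_le G M
  have h3 : ((carcs G M).card : ℝ) ≤ (cv G M).card * ((cv G M).card - 1) := by
    rw [← offd]; exact_mod_cast Finset.card_le_card (carcs_sub G M)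
  have hn : (2 : ℝ) ≤ Fintype.card V := by exact_mod_cast hV
  have hmn : ((cv G M).card : ℝ) ≤ Fintype.card V := by exact_mod_cast Finset.card_le_univ _
  have hCM : (C ≠ M) → ((carcs G C).card : ℝ) ≤
      (Fintype.card V - (cv G M).card) * (Fintype.card V - (cv G M).card - 1) := by
    intro hne
    have : carcs G C ⊆ ((cv G M)ᶜ).offDiag := by
      refine (carcs_sub G C).trans (Finset.offDiag_mono ?_)
      intro v hv
      simp only [cv, Finset.mem_compl, Finset.mem_filter, Finset.mem_univ, true_and] at hv ⊢
      rwa [hv]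
    have h5 : ((carcs G C).card : ℝ) ≤ (((cv G M)ᶜ).offDiag.card : ℝ) := by
      exact_mod_cast Finset.card_le_card this
    rwa [offd, Finset.card_compl, Nat.cast_sub (Finset.card_le_univ _)] at h5
  have hMC : ((carcs G M).card : ℝ) ≤ (carcs G C).card := by exact_mod_cast hC M
  set n : ℝ := (Fintype.card V : ℝ)
  set m : ℝ := ((cv G M).card : ℝ)
  have hm1 : 5 / 9 * n ≤ m := by
    have : 0 ≤ n * (m - 5 / 9 * n) := by nlinarith
    have := nonneg_of_mul_nonneg_right this (by linarith : 0 < n)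
    linarith
  have hm2 : 2 / 3 * n ≤ m := by
    by_contra hlt
    push Not at hlt
    nlinarith [mul_pos (sub_pos.2 hlt) (show 0 < m - n / 3 by linarith)]
  by_cases hne : C = M
  · rw [hne]; exact hm2
  · exfalso
    have h6 := hCM hne
    have hd : 0 ≤ n - m := by linarith
    nlinarith [mul_nonneg hd (show 0 ≤ n / 3 - (n - m) by linarith)]


/-- For every `ε > 0` there exists `n0` such that for every `n ≥ n0`, if `L`
and `L'` are simple graphs on the same `n`-element vertex set with `e(L) ≥ (5/9 + ε)·C(n,2)`
and `e(L') ≥ (5/9)·C(n,2)`, and `C`, `C'` are connected components of `L`, `L'` respectively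
with the maximum number of edges, then `C` and `C'` have an edge in common. -/
theorem stmt_5 (ε : ℝ) (hε : 0 < ε) : ∃ n0 : ℕ, ∀ n : ℕ, n0 ≤ n →
    ∀ (V : Type) [Fintype V] [DecidableEq V], Fintype.card V = n →
    ∀ (G G' : SimpleGraph V) [DecidableRel G.Adj] [DecidableRel G'.Adj],
      (5/9 + ε) * (n.choose 2 : ℝ) ≤ (G.edgeFinset.card : ℝ) →
      (5/9 : ℝ) * (n.choose 2 : ℝ) ≤ (G'.edgeFinset.card : ℝ) →
      ∀ (C : G.ConnectedComponent) (C' : G'.ConnectedComponent),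
        (∀ D : G.ConnectedComponent, (compEdges G D).ncard ≤ (compEdges G C).ncard) →
        (∀ D : G'.ConnectedComponent, (compEdges G' D).ncard ≤ (compEdges G' C').ncard) →
        ∃ u v : V, G.Adj u v ∧ G'.Adj u v ∧
          G.connectedComponentMk u = C ∧ G.connectedComponentMk v = C ∧
          G'.connectedComponentMk u = C' ∧ G'.connectedComponentMk v = C' := by
  refine ⟨⌈1 / (9 * ε)⌉₊ + 2, ?_⟩
  intro n hn V _ _ hV G G' _ _ hG hG' C C' hC hC'
  by_contra hcon
  have hn2 : 2 ≤ n := by omega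
  have hn2' : (2 : ℝ) ≤ n := by exact_mod_cast hn2
  have hnε : 1 / (9 * ε) + 2 ≤ (n : ℝ) := by
    have := Nat.le_ceil (1 / (9 * ε))
    have h' : ((⌈1 / (9 * ε)⌉₊ + 2 : ℕ) : ℝ) ≤ n := by exact_mod_cast hn
    push_cast at h'
    linarith
  have hnε2 : 1 < 9 * ε * (n - 1) := by
    have h9 : 0 < 9 * ε := by positivity
    have : 1 / (9 * ε) < n - 1 := by linarith
    rw [div_lt_iff₀ h9] at this
    linarith
  have hch : (n.choose 2 : ℝ) = n * (n - 1) / 2 := Nat.cast_choose_two ℝ n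
  have hA : ((5 / 9 + ε : ℝ)) * (n * (n - 1)) ≤ (arcs G).card := by
    rw [arcs_card]; push_cast; rw [hch] at hG; linarith
  have hA' : ((5 / 9 : ℝ)) * (n * (n - 1)) ≤ (arcs G').card := by
    rw [arcs_card]; push_cast; rw [hch] at hG'; linarith
  have hpos : 0 ≤ (n : ℝ) * (n - 1) := mul_nonneg (by linarith) (by linarith)
  have ha := large_comp G (by omega) (by rw [hV]; nlinarith) C
    (fun D => by rw [carcs_card, carcs_card]; exact Nat.mul_le_mul_left 2 (hC D))
  have hb := large_comp G' (by omega) (by rw [hV]; exact hA') C'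
    (fun D => by rw [carcs_card, carcs_card]; exact Nat.mul_le_mul_left 2 (hC' D))
  have h1 := arcs_le G C
  have h2 := arcs_le G' C'
  have hdis : Disjoint (carcs G C) (carcs G' C') := by
    rw [Finset.disjoint_left]
    intro p hp hp'
    simp only [carcs, Finset.mem_filter, Finset.mem_univ, true_and] at hp hp'
    exact hcon ⟨p.1, p.2, hp.1, hp'.1, hp.2, by rw [← mk_eq_of_adj hp.1, hp.2], hp'.2,
      by rw [← mk_eq_of_adj hp'.1, hp'.2]⟩
  have h3 : (carcs G C).card + (carcs G' C').card + (cv G C ∩ cv G' C').offDiag.card ≤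
      (cv G C).offDiag.card + (cv G' C').offDiag.card := by
    have e1 := Finset.card_union_of_disjoint hdis
    have e2 := Finset.card_union_add_card_inter (cv G C).offDiag (cv G' C').offDiag
    have e3 := Finset.card_le_card
      (Finset.union_subset_union (carcs_sub G C) (carcs_sub G' C'))
    rw [Finset.offDiag_inter]
    omega
  have h3' : ((carcs G C).card : ℝ) + (carcs G' C').card + (cv G C ∩ cv G' C').offDiag.card ≤
      (cv G C).offDiag.card + (cv G' C').offDiag.card := by exact_mod_cast h3
  rw [offd, offd, offd] at h3'
  have h4 := Finset.card_union_add_card_inter (cv G C) (cv G' C')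
  have h5 : (cv G C ∪ cv G' C').card ≤ n := hV ▸ Finset.card_le_univ _
  have h6 : ((cv G C).card : ℝ) + (cv G' C').card ≤ n + (cv G C ∩ cv G' C').card := by
    exact_mod_cast (by omega : (cv G C).card + (cv G' C').card ≤ n + (cv G C ∩ cv G' C').card)
  have hz : ((cv G C ∩ cv G' C').card : ℝ) ≤ n := by
    exact_mod_cast hV ▸ Finset.card_le_univ _
  have han : ((cv G C).card : ℝ) ≤ n := by exact_mod_cast hV ▸ Finset.card_le_univ _
  have hbn : ((cv G' C').card : ℝ) ≤ n := by exact_mod_cast hV ▸ Finset.card_le_univ _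
  rw [hV] at ha hb h1 h2
  generalize ((cv G C ∩ cv G' C').card : ℝ) = z at *
  generalize ((cv G C).card : ℝ) = a at *
  generalize ((cv G' C').card : ℝ) = b at *
  generalize (n : ℝ) = N at *
  have hz2 : (a + b - N) ^ 2 ≤ z ^ 2 :=
    pow_le_pow_left₀ (by linarith) (by linarith) 2
  have hab : (a - b) ^ 2 ≤ (N / 3) ^ 2 := by
    rw [sq_le_sq, abs_of_nonneg (show 0 ≤ N / 3 by linarith), abs_le]
    constructor <;> linarith
  have hf : N * 1 < N * (9 * ε * (N - 1)) := by
    apply mul_lt_mul_of_pos_left hnε2; linarith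
  nlinarith
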